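/- arXiv:1403.4911 — 6 statements merged into one kernel-verified Lean document; each statement's English description precedes it below -/
import Mathlib

section
/- Every bounded curvature path that has a self-intersection (i.e., there exist parameters t₁ < t₂ in its domain with γ(t₁) = γ(t₂)) is a free path. -/
noncomputable section

/-- The Euclidean plane. -/
abbrev E2 := EuclideanSpace ℝ (Fin 2)

/-- `γ : [0, s] → ℝ²` is a bounded curvature path (with curvature bound normalized to 1)
with derivative function `γ'`: it is `C¹` (it has the continuous derivative `γ'`),
parametrized by arc length, and piecewise `C²` with `‖γ''‖ ≤ 1` wherever the second
derivative is defined (off a finite set of break parameters). -/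
def IsBCPath (s : ℝ) (γ γ' : ℝ → E2) : Prop :=
  0 ≤ s ∧
  (∀ t ∈ Set.Icc 0 s, HasDerivAt γ (γ' t) t) ∧
  ContinuousOn γ' (Set.Icc 0 s) ∧
  (∀ t ∈ Set.Icc 0 s, ‖γ' t‖ = 1) ∧
  ∃ D : Finset ℝ, ∀ t ∈ Set.Icc 0 s, t ∉ D →
    ∃ a : E2, ‖a‖ ≤ 1 ∧ HasDerivAt γ' a t

/-- Membership in `Γ(x,y)`: a bounded curvature path with endpoint condition
`(x, X)`, `(y, Y)`. -/
def InGamma (x X y Y : E2) (s : ℝ) (γ γ' : ℝ → E2) : Prop :=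
  IsBCPath s γ γ' ∧ γ 0 = x ∧ γ' 0 = X ∧ γ s = y ∧ γ' s = Y

/-- A bounded curvature homotopy: a continuous one-parameter family, indexed by
`p ∈ [0,1]`, of bounded curvature paths `H p : [0, sl p] → ℝ²` (with derivative
`H' p`), all in `Γ(x,y)`.  Continuity is required for the length function and,
jointly, for the family reparametrized on the unit square. -/
def IsBCHomotopy (x X y Y : E2) (sl : ℝ → ℝ) (H H' : ℝ → ℝ → E2) : Prop :=
  (∀ p ∈ Set.Icc (0:ℝ) 1, InGamma x X y Y (sl p) (H p) (H' p)) ∧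
  ContinuousOn sl (Set.Icc 0 1) ∧
  ContinuousOn (fun q : ℝ × ℝ => H q.1 (q.2 * sl q.1))
    (Set.Icc 0 1 ×ˢ Set.Icc 0 1)

/-- Two bounded curvature paths with the same endpoint condition `(x,X),(y,Y)` are
bounded-homotopic if a bounded curvature homotopy deforms one into the other. -/
def BoundedHomotopic (x X y Y : E2) (s₀ : ℝ) (γ γ' : ℝ → E2)
    (s₁ : ℝ) (η η' : ℝ → E2) : Prop :=
  ∃ sl H H', IsBCHomotopy x X y Y sl H H' ∧
    sl 0 = s₀ ∧ sl 1 = s₁ ∧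
    Set.EqOn (H 0) γ (Set.Icc 0 s₀) ∧ Set.EqOn (H' 0) γ' (Set.Icc 0 s₀) ∧
    Set.EqOn (H 1) η (Set.Icc 0 s₁) ∧ Set.EqOn (H' 1) η' (Set.Icc 0 s₁)

/-- A bounded curvature path is free if, for every `L > 0`, it is bounded-homotopic
(within `Γ(x,y)` for its own endpoint condition) to a bounded curvature path of
length at least `L`. -/
def IsFreePath (s : ℝ) (γ γ' : ℝ → E2) : Prop :=
  ∀ L > 0, ∃ s' η η', L ≤ s' ∧
    BoundedHomotopic (γ 0) (γ' 0) (γ s) (γ' s) s γ γ' s' η η'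

/-- Scale factor of the loop. -/
def kk (a b l : ℝ) : ℝ := (b - a + l) / (b - a)

/-- Clamped parameter in the loop. -/
def psi (a b l t : ℝ) : ℝ := a + max 0 (min ((t - a) / kk a b l) (b - a))

/-- Reparametrization. -/
def phi (a b l t : ℝ) : ℝ := min t a + (psi a b l t - a) + max (t - b - l) 0

/-- The path with scaled loop. -/
def str (γ : ℝ → E2) (a b l t : ℝ) : E2 :=
  γ (phi a b l t) + (kk a b l - 1) • (γ (psi a b l t) - γ a)

lemma kk_ge {a b l : ℝ} (h : a < b) (hl : 0 ≤ l) : 1 ≤ kk a b l := by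
  unfold kk
  rw [le_div_iff₀ (by linarith)]; linarith

lemma kk_mul {a b l : ℝ} (h : a < b) : kk a b l * (b - a) = b - a + l := by
  unfold kk
  have : b - a ≠ 0 := by linarith
  field_simp

lemma psi_left {a b l t : ℝ} (h : a < b) (hl : 0 ≤ l) (ht : t ≤ a) : psi a b l t = a := by
  have hk := kk_ge h hl
  have : (t - a) / kk a b l ≤ 0 := div_nonpos_of_nonpos_of_nonneg (by linarith) (by linarith)
  unfold psi
  rw [max_eq_left (le_trans (min_le_left _ _) this)]; simp

lemma psi_mid {a b l t : ℝ} (h : a < b) (hl : 0 ≤ l) (ht : a ≤ t) (ht' : t ≤ b + l) :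
    psi a b l t = a + (t - a) / kk a b l := by
  have hk := kk_ge h hl
  have h1 : 0 ≤ (t - a) / kk a b l := div_nonneg (by linarith) (by linarith)
  have h2 : (t - a) / kk a b l ≤ b - a := by
    rw [div_le_iff₀ (by linarith), mul_comm, kk_mul h]; linarith
  unfold psi
  rw [min_eq_left h2, max_eq_right h1]

lemma psi_right {a b l t : ℝ} (h : a < b) (hl : 0 ≤ l) (ht : b + l ≤ t) :
    psi a b l t = b := by
  have hk := kk_ge h hl
  have h2 : b - a ≤ (t - a) / kk a b l := by
    rw [le_div_iff₀ (by linarith), mul_comm, kk_mul h]; linarith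
  unfold psi
  rw [min_eq_right h2, max_eq_right (by linarith)]; ring

lemma phi_left {a b l t : ℝ} (h : a < b) (hl : 0 ≤ l) (ht : t ≤ a) : phi a b l t = t := by
  unfold phi
  rw [psi_left h hl ht, min_eq_left ht, max_eq_right (by linarith)]; ring

lemma phi_mid {a b l t : ℝ} (h : a < b) (hl : 0 ≤ l) (ht : a ≤ t) (ht' : t ≤ b + l) :
    phi a b l t = a + (t - a) / kk a b l := by
  unfold phi
  rw [psi_mid h hl ht ht', min_eq_right ht, max_eq_right (by linarith)]; ring

lemma phi_right {a b l t : ℝ} (h : a < b) (hl : 0 ≤ l) (ht : b + l ≤ t) :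
    phi a b l t = t - l := by
  unfold phi
  rw [psi_right h hl ht, min_eq_right (by linarith), max_eq_left (by linarith)]; ring

lemma psi_mem {a b l : ℝ} (h : a < b) (t : ℝ) : psi a b l t ∈ Set.Icc a b := by
  unfold psi
  have h1 := le_max_left 0 (min ((t - a) / kk a b l) (b - a))
  have h2 : max 0 (min ((t - a) / kk a b l) (b - a)) ≤ b - a :=
    max_le (by linarith) (min_le_right _ _)
  constructor <;> linarith

lemma phi_mem {a b l s t : ℝ} (h : a < b) (hl : 0 ≤ l) (ha : 0 ≤ a) (hb : b ≤ s)
    (ht : t ∈ Set.Icc 0 (s + l)) : phi a b l t ∈ Set.Icc 0 s := by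
  obtain ⟨h0, h1⟩ := ht
  rcases le_total t a with h2 | h2
  · rw [phi_left h hl h2]; constructor <;> linarith
  rcases le_total t (b + l) with h3 | h3
  · rw [phi_mid h hl h2 h3, ← psi_mid h hl h2 h3]
    have := psi_mem (l := l) h t
    constructor <;> linarith [this.1, this.2]
  · rw [phi_right h hl h3]; constructor <;> linarith

lemma str_left {γ : ℝ → E2} {a b l t : ℝ} (h : a < b) (hl : 0 ≤ l) (ht : t ≤ a) :
    str γ a b l t = γ t := by
  unfold str; rw [phi_left h hl ht, psi_left h hl ht]; simp

lemma str_mid {γ : ℝ → E2} {a b l t : ℝ} (h : a < b) (hl : 0 ≤ l) (ht : a ≤ t)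
    (ht' : t ≤ b + l) :
    str γ a b l t = γ a + kk a b l • (γ (a + (t - a) / kk a b l) - γ a) := by
  unfold str; rw [phi_mid h hl ht ht', psi_mid h hl ht ht']; module

lemma str_right {γ : ℝ → E2} {a b l t : ℝ} (h : a < b) (hl : 0 ≤ l) (hγ : γ a = γ b)
    (ht : b + l ≤ t) :
    str γ a b l t = γ (t - l) := by
  unfold str; rw [phi_right h hl ht, psi_right h hl ht, hγ]; simp

lemma glue {f g k : ℝ → E2} {a d : ℝ} {v : E2} (hd : a < d) (hg : HasDerivAt g v a)
    (hk : HasDerivAt k v a) {c : ℝ} (hc : c < a)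
    (h1 : ∀ t, c < t → t ≤ a → f t = g t) (h2 : ∀ t, a ≤ t → t < d → f t = k t) :
    HasDerivAt f v a := by
  have e1 : HasDerivWithinAt f v (Set.Ioc c a) a :=
    (hg.hasDerivWithinAt (s := Set.Ioc c a)).congr (fun t ht => h1 t ht.1 ht.2) (h1 a hc le_rfl)
  have e2 : HasDerivWithinAt f v (Set.Ico a d) a :=
    (hk.hasDerivWithinAt (s := Set.Ico a d)).congr (fun t ht => h2 t ht.1 ht.2) (h2 a le_rfl hd)
  have e3 := e1.union e2
  rw [Set.Ioc_union_Ico_eq_Ioo hc hd] at e3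
  exact e3.hasDerivAt (Ioo_mem_nhds hc hd)

lemma mid_deriv {γ : ℝ → E2} {a k t : ℝ} {v : E2}
    (h : HasDerivAt γ v (a + (t - a) / k)) :
    HasDerivAt (fun t => γ (a + (t - a) / k)) (k⁻¹ • v) t := by
  have h1 : HasDerivAt (fun t : ℝ => a + (t - a) / k) k⁻¹ t := by
    have := (((hasDerivAt_id t).sub_const a).div_const k).const_add a
    simpa using this
  exact h.scomp t h1

lemma mid_deriv2 {γ : ℝ → E2} {a k t : ℝ} {v : E2} (hk : 1 ≤ k)
    (h : HasDerivAt γ v (a + (t - a) / k)) :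
    HasDerivAt (fun t => γ a + k • (γ (a + (t - a) / k) - γ a)) v t := by
  have := (((mid_deriv h).sub_const (γ a)).const_smul k).const_add (γ a)
  rw [smul_smul, mul_inv_cancel₀ (by linarith), one_smul] at this
  exact this

lemma right_deriv {γ : ℝ → E2} {l t : ℝ} {v : E2} (h : HasDerivAt γ v (t - l)) :
    HasDerivAt (fun t => γ (t - l)) v t := h.comp_sub_const t l

lemma phi_cont {a b l : ℝ} : Continuous (fun t => phi a b l t) := by
  unfold phi psi; fun_prop

lemma str_bc {s : ℝ} {γ γ' : ℝ → E2} {a b l : ℝ} (hγ : IsBCPath s γ γ') (h : a < b)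
    (hl : 0 ≤ l) (ha : 0 ≤ a) (hb : b ≤ s) (hab : γ a = γ b) :
    IsBCPath (s + l) (str γ a b l) (fun t => γ' (phi a b l t)) := by
  obtain ⟨hs, hd, hc, hn, D, hD⟩ := hγ
  have hk := kk_ge h hl
  have hkm := kk_mul (l := l) h
  refine ⟨by linarith, ?_, ?_, ?_, ?_⟩
  · intro t ht
    have hd' := hd _ (phi_mem h hl ha hb ht)
    show HasDerivAt (str γ a b l) (γ' (phi a b l t)) t
    rcases lt_trichotomy t a with h1 | h1 | h1
    · rw [phi_left h hl h1.le] at hd' ⊢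
      refine hd'.congr_of_eventuallyEq ?_
      filter_upwards [Iio_mem_nhds h1] with x hx
      exact str_left h hl (le_of_lt hx)
    · have e1 := hd'
      rw [phi_left h hl h1.le] at e1
      have e2 := hd'
      rw [phi_mid h hl h1.ge (by linarith)] at e2
      rw [phi_left h hl h1.le]
      have e2' := mid_deriv2 hk e2
      rw [← phi_mid h hl h1.ge (by linarith), phi_left h hl h1.le] at e2'
      exact glue (d := b + l) (c := t - 1) (by linarith) e1 e2' (by linarith)
        (fun x _ hx => str_left h hl (by linarith))
        (fun x hx hx' => str_mid h hl (by linarith) (by linarith))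
    rcases lt_trichotomy t (b + l) with h2 | h2 | h2
    · rw [phi_mid h hl h1.le h2.le] at hd' ⊢
      refine (mid_deriv2 hk hd').congr_of_eventuallyEq ?_
      filter_upwards [Ioo_mem_nhds h1 h2] with x hx
      exact str_mid h hl hx.1.le hx.2.le
    · have e1 := hd'
      rw [phi_right h hl h2.ge] at e1
      have e2 := hd'
      rw [phi_mid h hl h1.le h2.le] at e2
      rw [phi_right h hl h2.ge]
      have e2' := mid_deriv2 hk e2
      rw [← phi_mid h hl h1.le h2.le, phi_right h hl h2.ge] at e2'
      exact glue (d := t + 1) (c := a) (by linarith) e2' (right_deriv e1) (by linarith)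
        (fun x hx hx' => str_mid h hl (by linarith) (by linarith))
        (fun x hx _ => str_right h hl hab (by linarith))
    · rw [phi_right h hl h2.le] at hd' ⊢
      refine (right_deriv hd').congr_of_eventuallyEq ?_
      filter_upwards [Ioi_mem_nhds h2] with x hx
      exact str_right h hl hab (le_of_lt hx)
  · exact hc.comp phi_cont.continuousOn (fun t ht => phi_mem h hl ha hb ht)
  · intro t ht
    exact hn _ (phi_mem h hl ha hb ht)
  · classical
    refine ⟨{a, b + l} ∪ (D ∪ (D.image (fun x => a + kk a b l * (x - a)) ∪
      D.image (fun x => x + l))), ?_⟩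
    intro t ht htD
    simp only [Finset.mem_union, Finset.mem_insert, Finset.mem_singleton, Finset.mem_image,
      not_or, not_exists, not_and] at htD
    obtain ⟨⟨n1, n2⟩, n3, n4, n5⟩ := htD
    have hm := phi_mem h hl ha hb ht
    rcases lt_or_gt_of_ne n1 with h1 | h1
    · rw [phi_left h hl h1.le] at hm
      obtain ⟨v, hv, hv'⟩ := hD t hm n3
      refine ⟨v, hv, hv'.congr_of_eventuallyEq ?_⟩
      filter_upwards [Iio_mem_nhds h1] with x hx
      rw [phi_left h hl (le_of_lt hx)]
    rcases lt_or_gt_of_ne n2 with h2 | h2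
    · rw [phi_mid h hl h1.le h2.le] at hm
      obtain ⟨v, hv, hv'⟩ := hD _ hm (fun hx => n4 _ hx (by
        have : kk a b l ≠ 0 := by linarith
        field_simp; ring))
      refine ⟨(kk a b l)⁻¹ • v, ?_, (mid_deriv hv').congr_of_eventuallyEq ?_⟩
      · rw [norm_smul, Real.norm_eq_abs, abs_of_nonneg (by positivity)]
        exact mul_le_one₀ (inv_le_one_of_one_le₀ hk) (norm_nonneg _) hv
      · filter_upwards [Ioo_mem_nhds h1 h2] with x hx
        rw [phi_mid h hl hx.1.le hx.2.le]
    · rw [phi_right h hl h2.le] at hm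
      obtain ⟨v, hv, hv'⟩ := hD _ hm (fun hx => n5 _ hx (by ring))
      refine ⟨v, hv, (right_deriv hv').congr_of_eventuallyEq ?_⟩
      filter_upwards [Ioi_mem_nhds h2] with x hx
      rw [phi_right h hl (le_of_lt hx)]

/-- Every bounded curvature path that has a self-intersection
(there are parameters `t₁ < t₂` in its domain with `γ t₁ = γ t₂`) is a free path. -/
theorem self_intersecting_bc_path_is_free (s : ℝ) (γ γ' : ℝ → E2)
    (hγ : IsBCPath s γ γ')
    (hself : ∃ t₁ ∈ Set.Icc 0 s, ∃ t₂ ∈ Set.Icc 0 s, t₁ < t₂ ∧ γ t₁ = γ t₂) :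
    IsFreePath s γ γ' := by
  obtain ⟨a, ⟨ha, _⟩, b, ⟨_, hb⟩, h, hab⟩ := hself
  have hγ0 := hγ
  obtain ⟨hs, hd, hc, -⟩ := hγ
  have hcγ : ContinuousOn γ (Set.Icc 0 s) :=
    fun t ht => (hd t ht).continuousAt.continuousWithinAt
  have hphi0 : ∀ t, phi a b 0 t = t := by
    intro t
    have hk1 : kk a b 0 = 1 := by
      unfold kk; rw [add_zero]; exact div_self (by linarith)
    rcases le_total t a with h1 | h1
    · exact phi_left h le_rfl h1
    rcases le_total t (b + 0) with h2 | h2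
    · rw [phi_mid h le_rfl h1 h2, hk1]; ring
    · rw [phi_right h le_rfl h2]; ring
  have hstr0 : ∀ t, str γ a b 0 t = γ t := by
    intro t
    have hk1 : kk a b 0 = 1 := by
      unfold kk; rw [add_zero]; exact div_self (by linarith)
    unfold str; rw [hphi0, hk1]; simp
  intro L hL
  refine ⟨s + 1 * L, str γ a b (1 * L), fun t => γ' (phi a b (1 * L) t), by linarith,
    fun p => s + p * L, fun p => str γ a b (p * L), fun p t => γ' (phi a b (p * L) t),
    ⟨?_, by fun_prop, ?_⟩, by simp, rfl, ?_, ?_, fun _ _ => rfl, fun _ _ => rfl⟩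
  · intro p hp
    have hl : 0 ≤ p * L := mul_nonneg hp.1 hL.le
    refine ⟨str_bc hγ0 h hl ha hb hab, str_left h hl ha, ?_, ?_, ?_⟩
    · simp only [phi_left h hl ha]
    · show str γ a b (p * L) (s + p * L) = γ s
      rw [str_right h hl hab (by linarith)]; simp
    · simp only [phi_right h hl (t := s + p * L) (by linarith)]; simp
  · have hl : ∀ q ∈ Set.Icc (0:ℝ) 1 ×ˢ Set.Icc (0:ℝ) 1, 0 ≤ q.1 * L :=
      fun q hq => mul_nonneg hq.1.1 hL.le
    have hkc : Continuous (fun q : ℝ × ℝ => kk a b (q.1 * L)) := by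
      unfold kk; fun_prop
    have hpsi : ContinuousOn (fun q : ℝ × ℝ => psi a b (q.1 * L) (q.2 * (s + q.1 * L)))
        (Set.Icc 0 1 ×ˢ Set.Icc 0 1) := by
      unfold psi
      have : ContinuousOn (fun q : ℝ × ℝ => (q.2 * (s + q.1 * L) - a) / kk a b (q.1 * L))
          (Set.Icc 0 1 ×ˢ Set.Icc 0 1) := by
        refine ContinuousOn.div (by fun_prop) hkc.continuousOn ?_
        intro q hq
        have := kk_ge h (hl q hq)
        linarith
      fun_prop
    have hphi : ContinuousOn (fun q : ℝ × ℝ => phi a b (q.1 * L) (q.2 * (s + q.1 * L)))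
        (Set.Icc 0 1 ×ˢ Set.Icc 0 1) := by
      unfold phi
      fun_prop
    unfold str
    refine ContinuousOn.add (hcγ.comp hphi ?_) (ContinuousOn.smul
      (hkc.sub continuous_const).continuousOn
      (ContinuousOn.sub (hcγ.comp hpsi ?_) continuousOn_const))
    · intro q hq
      have h0 := hl q hq
      have hS : 0 ≤ s + q.1 * L := by linarith
      exact phi_mem h h0 ha hb ⟨mul_nonneg hq.2.1 hS, mul_le_of_le_one_left hS hq.2.2⟩
    · intro q hq
      have := psi_mem (l := q.1 * L) h (q.2 * (s + q.1 * L))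
      exact ⟨by linarith [this.1], by linarith [this.2]⟩
  · intro t _
    simp only [zero_mul]
    exact hstr0 t
  · intro t _
    simp only [zero_mul, hphi0]
end
end

section
/- Every bounded curvature path having parallel tangents is a free path. -/
noncomputable section

def AA (c l t : ℝ) : ℝ := max 0 (min l (t - c))

theorem AA_lo {c l t : ℝ} (h : t ≤ c) (hl : 0 ≤ l) : AA c l t = 0 := by
  unfold AA; apply max_eq_left; exact (min_le_right _ _).trans (by linarith)

theorem AA_hi {c l t : ℝ} (h : c + l ≤ t) (hl : 0 ≤ l) : AA c l t = l := by
  unfold AA; rw [min_eq_left (by linarith), max_eq_right hl]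

theorem AA_mid {c l t : ℝ} (h : c ≤ t) (h' : t ≤ c + l) : AA c l t = t - c := by
  unfold AA; rw [min_eq_right (by linarith), max_eq_right (by linarith)]

theorem AA_lip (c l t u : ℝ) : |(t - AA c l t) - (u - AA c l u)| ≤ |t - u| := by
  unfold AA
  rcases max_cases 0 (min l (t - c)) with h1 | h1 <;>
  rcases max_cases 0 (min l (u - c)) with h2 | h2 <;>
  rcases min_cases l (t - c) with h3 | h3 <;>
  rcases min_cases l (u - c) with h4 | h4 <;>
  rcases abs_cases (t - u) with h5 | h5 <;>
  rw [abs_le] <;> constructor <;> linarith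

theorem AA_cont (c l : ℝ → ℝ) (f : ℝ × ℝ → ℝ) (hc : Continuous c) (hl : Continuous l)
    (hf : Continuous f) : Continuous (fun q : ℝ × ℝ => AA (c q.1) (l q.1) (f q)) := by
  unfold AA; fun_prop

def ph (t₁ t₂ l t : ℝ) : ℝ := t - AA t₁ l t - AA (t₂ + l) l t

theorem ph_cases {t₁ t₂ l : ℝ} (h : t₁ < t₂) (hl : 0 ≤ l) (t : ℝ) :
    (t ≤ t₁ ∧ AA t₁ l t = 0 ∧ AA (t₂ + l) l t = 0) ∨
    (t₁ ≤ t ∧ t ≤ t₁ + l ∧ AA t₁ l t = t - t₁ ∧ AA (t₂ + l) l t = 0) ∨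
    (t₁ + l ≤ t ∧ t ≤ t₂ + l ∧ AA t₁ l t = l ∧ AA (t₂ + l) l t = 0) ∨
    (t₂ + l ≤ t ∧ t ≤ t₂ + l + l ∧ AA t₁ l t = l ∧ AA (t₂ + l) l t = t - (t₂ + l)) ∨
    (t₂ + l + l ≤ t ∧ AA t₁ l t = l ∧ AA (t₂ + l) l t = l) := by
  rcases le_total t t₁ with h1 | h1
  · exact Or.inl ⟨h1, AA_lo h1 hl, AA_lo (by linarith) hl⟩
  rcases le_total t (t₁ + l) with h2 | h2
  · exact Or.inr (Or.inl ⟨h1, h2, AA_mid h1 h2, AA_lo (by linarith) hl⟩)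
  rcases le_total t (t₂ + l) with h3 | h3
  · exact Or.inr (Or.inr (Or.inl ⟨h2, h3, AA_hi h2 hl, AA_lo h3 hl⟩))
  rcases le_total t (t₂ + l + l) with h4 | h4
  · exact Or.inr (Or.inr (Or.inr (Or.inl ⟨h3, h4, AA_hi h2 hl, AA_mid h3 h4⟩)))
  · exact Or.inr (Or.inr (Or.inr (Or.inr ⟨h4, AA_hi h2 hl, AA_hi h4 hl⟩)))

theorem ph_mem {t₁ t₂ l s t : ℝ} (h : t₁ < t₂) (hl : 0 ≤ l) (h1 : 0 ≤ t₁) (h2 : t₂ ≤ s)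
    (ht : t ∈ Set.Icc 0 (s + 2 * l)) : ph t₁ t₂ l t ∈ Set.Icc 0 s := by
  unfold ph
  obtain ⟨ha, hb⟩ := ht
  rcases ph_cases h hl t with ⟨_, e1, e2⟩ | ⟨_, _, e1, e2⟩ | ⟨_, _, e1, e2⟩ | ⟨_, _, e1, e2⟩ | ⟨_, e1, e2⟩ <;>
  rw [e1, e2] <;> constructor <;> linarith

def HH (t₁ t₂ : ℝ) (γ : ℝ → E2) (v : E2) (l t : ℝ) : E2 :=
  γ (ph t₁ t₂ l t) + (AA t₁ l t - AA (t₂ + l) l t) • v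

theorem deriv_shift {E : Type*} [NormedAddCommGroup E] [NormedSpace ℝ E] {f : ℝ → E} {a w : E} {c t : ℝ}
    (h : HasDerivAt f a (t - c)) : HasDerivAt (fun u => f (u - c) + w) a t :=
  (h.comp_sub_const t c).add_const w

theorem deriv_G {E : Type*} [NormedAddCommGroup E] [NormedSpace ℝ E] {f : ℝ → E} {a : E} {t : ℝ}
    (h : HasDerivAt f a t) : HasDerivAt (fun u => f u - u • a) 0 t := by
  have k := h.sub ((hasDerivAt_id t).smul_const a)
  rw [one_smul, sub_self] at k
  exact k

theorem deriv_zero_lip {f : ℝ → E2} {g : ℝ → ℝ} {t : ℝ} (h : HasDerivAt f 0 (g t))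
    (hg : ∀ u, |g u - g t| ≤ |u - t|) : HasDerivAt (fun u => f (g u)) 0 t := by
  have hc : Filter.Tendsto g (nhds t) (nhds (g t)) := by
    rw [Metric.tendsto_nhds_nhds]
    intro e he
    exact ⟨e, he, fun {u} hu => lt_of_le_of_lt (hg u) hu⟩
  rw [hasDerivAt_iff_isLittleO] at h ⊢
  simp only [smul_zero, sub_zero] at h ⊢
  have h1 := h.comp_tendsto hc
  refine h1.trans_isBigO ?_
  apply Asymptotics.IsBigO.of_bound 1
  filter_upwards with u
  simpa using hg u

theorem HH_deriv {t₁ t₂ l s t : ℝ} {γ γ' : ℝ → E2} (h : t₁ < t₂) (hl : 0 ≤ l) (h1 : 0 ≤ t₁)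
    (h2 : t₂ ≤ s) (hp : γ' t₂ = -γ' t₁)
    (hd : ∀ t ∈ Set.Icc 0 s, HasDerivAt γ (γ' t) t) (ht : t ∈ Set.Icc 0 (s + 2 * l)) :
    HasDerivAt (HH t₁ t₂ γ (γ' t₁) l) (γ' (ph t₁ t₂ l t)) t := by
  have hm := hd _ (ph_mem h hl h1 h2 ht)
  have mid1 : t₁ ≤ t → t ≤ t₁ + l →
      HasDerivAt (HH t₁ t₂ γ (γ' t₁) l) (γ' (ph t₁ t₂ l t)) t := by
    intro ha hb
    have e : t - AA t₁ l t = t₁ := by rw [AA_mid ha hb]; ring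
    have e2 : ph t₁ t₂ l t = t₁ := by
      unfold ph; rw [e, AA_lo (by linarith) hl]; ring
    rw [e2] at hm ⊢
    have hG : HasDerivAt (fun u => γ u - u • γ' t₁) 0 (t - AA t₁ l t) := by
      rw [e]
      exact deriv_G hm
    have k := (deriv_zero_lip (g := fun u => u - AA t₁ l u) hG
      (fun u => AA_lip _ _ _ _)).add ((hasDerivAt_id t).smul_const (γ' t₁))
    simp only [one_smul, zero_add] at k
    refine k.congr_of_eventuallyEq ?_
    filter_upwards [Iio_mem_nhds (show t < t₂ + l by linarith)] with u hu
    simp only [HH, ph, Pi.add_apply, id]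
    rw [AA_lo (le_of_lt hu) hl]
    simp only [sub_zero]
    module
  have mid2 : t₂ + l ≤ t → t ≤ t₂ + l + l →
      HasDerivAt (HH t₁ t₂ γ (γ' t₁) l) (γ' (ph t₁ t₂ l t)) t := by
    intro ha hb
    have e : t - AA (t₂ + l) l t - l = t₂ := by rw [AA_mid ha hb]; ring
    have e2 : ph t₁ t₂ l t = t₂ := by
      unfold ph; rw [AA_hi (by linarith) hl]; linarith
    rw [e2] at hm ⊢
    have hG : HasDerivAt (fun u => γ u - u • γ' t₂) 0 (t - AA (t₂ + l) l t - l) := by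
      rw [e]
      exact deriv_G hm
    have k := ((deriv_zero_lip (g := fun u => u - AA (t₂ + l) l u - l) hG
      (fun u => by simpa using AA_lip (t₂ + l) l u t)).add
        ((hasDerivAt_id t).smul_const (γ' t₂))).add_const ((l + l) • γ' t₁)
    simp only [one_smul, zero_add] at k
    refine k.congr_of_eventuallyEq ?_
    filter_upwards [Ioi_mem_nhds (show t₁ + l < t by linarith)] with u hu
    simp only [HH, ph, Pi.add_apply, id]
    rw [AA_hi (le_of_lt hu) hl, hp, show u - AA (t₂ + l) l u - l = u - l - AA (t₂ + l) l u by ring]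
    module
  rcases lt_or_ge t t₁ with a1 | a1
  · rw [ph, AA_lo a1.le hl, AA_lo (by linarith) hl, sub_zero, sub_zero] at hm ⊢
    refine hm.congr_of_eventuallyEq ?_
    filter_upwards [Iio_mem_nhds a1] with u hu
    have hu' : u < t₁ := hu
    simp [HH, ph, AA_lo hu'.le hl, AA_lo (show u ≤ t₂ + l by linarith) hl]
  rcases le_or_gt t (t₁ + l) with a2 | a2
  · exact mid1 a1 a2
  rcases lt_or_ge t (t₂ + l) with a3 | a3
  · rw [ph, AA_hi a2.le hl, AA_lo a3.le hl, sub_zero] at hm ⊢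
    refine (deriv_shift (w := l • γ' t₁) hm).congr_of_eventuallyEq ?_
    filter_upwards [Iio_mem_nhds a3, Ioi_mem_nhds a2] with u hu hu2
    simp [HH, ph, AA_hi (le_of_lt hu2) hl, AA_lo (le_of_lt hu) hl]
  rcases le_or_gt t (t₂ + l + l) with a4 | a4
  · exact mid2 a3 a4
  · rw [ph, AA_hi a2.le hl, AA_hi a4.le hl, sub_sub] at hm ⊢
    refine (deriv_shift (w := 0) hm).congr_of_eventuallyEq ?_
    filter_upwards [Ioi_mem_nhds a4, Ioi_mem_nhds a2] with u hu hu2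
    simp [HH, ph, AA_hi (le_of_lt hu2) hl, AA_hi (le_of_lt hu) hl, sub_sub]

theorem HH_deriv2 {t₁ t₂ l s t : ℝ} {γ' : ℝ → E2} (h : t₁ < t₂) (hl : 0 ≤ l) (h1 : 0 ≤ t₁)
    (h2 : t₂ ≤ s) (D : Set ℝ)
    (hd : ∀ t ∈ Set.Icc 0 s, t ∉ D → ∃ a : E2, ‖a‖ ≤ 1 ∧ HasDerivAt γ' a t)
    (ht : t ∈ Set.Icc 0 (s + 2 * l)) (n1 : t ≠ t₁) (n2 : t ≠ t₁ + l) (n3 : t ≠ t₂ + l)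
    (n4 : t ≠ t₂ + l + l) (d1 : t ∉ D) (d2 : t - l ∉ D) (d3 : t - (l + l) ∉ D) :
    ∃ a : E2, ‖a‖ ≤ 1 ∧ HasDerivAt (fun u => γ' (ph t₁ t₂ l u)) a t := by
  have hm := hd _ (ph_mem h hl h1 h2 ht)
  rcases lt_or_gt_of_ne n1 with a1 | a1
  · rw [ph, AA_lo a1.le hl, AA_lo (by linarith) hl, sub_zero, sub_zero] at hm
    obtain ⟨a, ha, hm⟩ := hm d1
    refine ⟨a, ha, hm.congr_of_eventuallyEq ?_⟩
    filter_upwards [Iio_mem_nhds a1] with u hu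
    have hu' : u < t₁ := hu
    simp [ph, AA_lo hu'.le hl, AA_lo (show u ≤ t₂ + l by linarith) hl]
  rcases lt_or_gt_of_ne n2 with a2 | a2
  · refine ⟨0, by simp, (hasDerivAt_const t (γ' t₁)).congr_of_eventuallyEq ?_⟩
    filter_upwards [Iio_mem_nhds a2, Ioi_mem_nhds a1] with u hu hu2
    have hu' : u < t₁ + l := hu
    simp [ph, AA_mid (le_of_lt hu2) hu'.le, AA_lo (show u ≤ t₂ + l by linarith) hl]
  rcases lt_or_gt_of_ne n3 with a3 | a3
  · rw [ph, AA_hi a2.le hl, AA_lo a3.le hl, sub_zero] at hm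
    obtain ⟨a, ha, hm⟩ := hm d2
    refine ⟨a, ha, (deriv_shift (w := 0) hm).congr_of_eventuallyEq ?_⟩
    filter_upwards [Iio_mem_nhds a3, Ioi_mem_nhds a2] with u hu hu2
    simp [ph, AA_hi (le_of_lt hu2) hl, AA_lo (le_of_lt hu) hl]
  rcases lt_or_gt_of_ne n4 with a4 | a4
  · refine ⟨0, by simp, (hasDerivAt_const t (γ' t₂)).congr_of_eventuallyEq ?_⟩
    filter_upwards [Iio_mem_nhds a4, Ioi_mem_nhds a3, Ioi_mem_nhds a2] with u hu hu2 hu3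
    simp only [ph, AA_mid (le_of_lt hu2) (le_of_lt hu), AA_hi (le_of_lt hu3) hl]
    congr 1; ring
  · rw [ph, AA_hi a2.le hl, AA_hi a4.le hl, sub_sub] at hm
    obtain ⟨a, ha, hm⟩ := hm d3
    refine ⟨a, ha, (deriv_shift (w := 0) hm).congr_of_eventuallyEq ?_⟩
    filter_upwards [Ioi_mem_nhds a4, Ioi_mem_nhds a2] with u hu hu2
    simp [ph, AA_hi (le_of_lt hu2) hl, AA_hi (le_of_lt hu) hl, sub_sub]

theorem HH_bc {t₁ t₂ l s : ℝ} {γ γ' : ℝ → E2} (h : t₁ < t₂) (hl : 0 ≤ l) (h1 : 0 ≤ t₁)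
    (h2 : t₂ ≤ s) (hp : γ' t₂ = -γ' t₁) (hγ : IsBCPath s γ γ') :
    IsBCPath (s + 2 * l) (HH t₁ t₂ γ (γ' t₁) l) (fun t => γ' (ph t₁ t₂ l t)) := by
  obtain ⟨hs, hd, hc, hn, D, hD⟩ := hγ
  refine ⟨by linarith, fun t ht => HH_deriv h hl h1 h2 hp hd ht, ?_,
    fun t ht => hn _ (ph_mem h hl h1 h2 ht), ?_⟩
  · refine hc.comp (Continuous.continuousOn ?_) (fun t ht => ph_mem h hl h1 h2 ht)
    unfold ph AA; fun_prop
  · classical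
    refine ⟨{t₁, t₁ + l, t₂ + l, t₂ + l + l} ∪ D ∪ D.image (· + l) ∪ D.image (· + (l + l)), ?_⟩
    intro t ht hn
    simp only [Finset.mem_union, Finset.mem_insert, Finset.mem_singleton, Finset.mem_image,
      not_or, not_exists, not_and] at hn
    obtain ⟨⟨⟨⟨n1, n2, n3, n4⟩, d1⟩, d2⟩, d3⟩ := hn
    exact HH_deriv2 h hl h1 h2 (D : Set ℝ) (fun t ht h => hD t ht (by simpa using h)) ht
      n1 n2 n3 n4 (by simpa using d1) (fun hh => d2 _ (by simpa using hh) (by ring))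
      (fun hh => d3 _ (by simpa using hh) (by ring))

/-- Every bounded curvature path having parallel tangents
(two parameters `t₁ < t₂` with `γ' t₂ = -γ' t₁`) is a free path. -/
theorem bc_path_with_parallel_tangents_is_free (s : ℝ) (γ γ' : ℝ → E2)
    (hγ : IsBCPath s γ γ')
    (hpar : ∃ t₁ ∈ Set.Icc 0 s, ∃ t₂ ∈ Set.Icc 0 s, t₁ < t₂ ∧ γ' t₂ = -γ' t₁) :
    IsFreePath s γ γ' := by
  obtain ⟨t₁, ⟨h1, _⟩, t₂, ⟨_, h2⟩, h, hp⟩ := hpar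
  intro L hL
  have hs := hγ.1
  refine ⟨s + 2 * (1 * L), HH t₁ t₂ γ (γ' t₁) (1 * L), fun t => γ' (ph t₁ t₂ (1 * L) t),
    by linarith, fun p => s + 2 * (p * L), fun p => HH t₁ t₂ γ (γ' t₁) (p * L),
    fun p t => γ' (ph t₁ t₂ (p * L) t), ⟨?_, by fun_prop, ?_⟩, by simp, rfl, ?_, ?_,
    fun _ _ => rfl, fun _ _ => rfl⟩
  · intro p hp'
    have hl : 0 ≤ p * L := mul_nonneg hp'.1 hL.le
    have e1 : AA t₁ (p * L) 0 = 0 := AA_lo h1 hl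
    have e2 : AA (t₂ + p * L) (p * L) 0 = 0 := AA_lo (by linarith) hl
    have e3 : AA t₁ (p * L) (s + 2 * (p * L)) = p * L := AA_hi (by linarith) hl
    have e4 : AA (t₂ + p * L) (p * L) (s + 2 * (p * L)) = p * L := AA_hi (by linarith) hl
    have e5 : ph t₁ t₂ (p * L) (s + 2 * (p * L)) = s := by rw [ph, e3, e4]; ring
    have e6 : ph t₁ t₂ (p * L) 0 = 0 := by rw [ph, e1, e2]; ring
    refine ⟨HH_bc h hl h1 h2 hp hγ, ?_, ?_, ?_, ?_⟩
    · simp [HH, e6, e1, e2]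
    · simp [e6]
    · simp [HH, e5, e3, e4]
    · simp [e5]
  · have hγc : ContinuousOn γ (Set.Icc 0 s) :=
      fun t ht => (hγ.2.1 t ht).continuousAt.continuousWithinAt
    unfold HH
    refine ContinuousOn.add (hγc.comp (Continuous.continuousOn ?_) ?_) (Continuous.continuousOn ?_)
    · unfold ph AA; fun_prop
    · rintro ⟨p, u⟩ ⟨hp', hu⟩
      have hl : 0 ≤ p * L := mul_nonneg hp'.1 hL.le
      refine ph_mem h hl h1 h2 ⟨mul_nonneg hu.1 (by linarith), ?_⟩
      exact mul_le_of_le_one_left (by linarith) hu.2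
    · unfold AA; fun_prop
  all_goals
    intro t _
    have e (c : ℝ) : AA c 0 t = 0 := by
      unfold AA; exact max_eq_left (min_le_left _ _)
    simp [HH, ph, e]
end
end

section
/- Every bounded curvature path containing as a subpath an arc of a circle of radius r ≥ 1 whose length is greater than or equal to πr (i.e., there exist t₁ < t₂ in the domain, a center c ∈ ℝ² and r ≥ 1 with γ(t) lying on the circle of radius r about c for all t ∈ [t₁, t₂] and t₂ − t₁ ≥ πr) is a free path. -/
noncomputable section

/-- time spent on the inserted segment -/
def clampTime (t₀ l t : ℝ) : ℝ := max 0 (min l (t - t₀))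

/-- insertion of a straight segment of length `l` at time `t₀` -/
def insPath (t₀ l : ℝ) (u : E2) (γ : ℝ → E2) (t : ℝ) : E2 :=
  γ (t - clampTime t₀ l t) + clampTime t₀ l t • u

lemma clamp_left {t₀ l t : ℝ} (h : t ≤ t₀) : clampTime t₀ l t = 0 := by
  unfold clampTime
  exact max_eq_left (le_trans (min_le_right _ _) (by linarith))

lemma clamp_mid {t₀ l t : ℝ} (h : t₀ ≤ t) (h2 : t ≤ t₀ + l) : clampTime t₀ l t = t - t₀ := by
  unfold clampTime
  rw [min_eq_right (by linarith), max_eq_right (by linarith)]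

lemma clamp_right {t₀ l t : ℝ} (hl : 0 ≤ l) (h : t₀ + l ≤ t) : clampTime t₀ l t = l := by
  unfold clampTime
  rw [min_eq_left (by linarith), max_eq_right (by linarith)]

lemma clamp_maps {t₀ l s t : ℝ} (hl : 0 ≤ l) (h0 : t₀ ∈ Set.Icc 0 s) (ht : t ∈ Set.Icc 0 (s + l)) :
    t - clampTime t₀ l t ∈ Set.Icc 0 s := by
  obtain ⟨a, b⟩ := h0
  obtain ⟨c, d⟩ := ht
  rcases le_total t t₀ with h | h
  · rw [clamp_left h]; constructor <;> linarith
  · rcases le_total t (t₀ + l) with h2 | h2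
    · rw [clamp_mid h h2]; constructor <;> linarith
    · rw [clamp_right hl h2]; constructor <;> linarith

lemma clamp_cont (t₀ l : ℝ) : Continuous (fun t => clampTime t₀ l t) := by
  unfold clampTime; fun_prop

lemma phi_lip {t₀ l : ℝ} (hl : 0 ≤ l) (t t' : ℝ) :
    |(t - clampTime t₀ l t) - (t' - clampTime t₀ l t')| ≤ |t - t'| := by
  rcases le_total t t₀ with h | h <;> rcases le_total t' t₀ with h' | h' <;>
  rcases le_total t (t₀ + l) with h2 | h2 <;> rcases le_total t' (t₀ + l) with h2' | h2' <;>
  first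
  | rw [clamp_left h] | rw [clamp_mid h h2] | rw [clamp_right hl h2]
  all_goals first
  | rw [clamp_left h'] | rw [clamp_mid h' h2'] | rw [clamp_right hl h2']
  all_goals
    rw [abs_le]
    rcases abs_cases (t - t') with ⟨e, _⟩ | ⟨e, _⟩ <;> rw [e] <;> constructor <;> linarith

lemma ins_hasDerivAt {t₀ l t : ℝ} {γ γ' : ℝ → E2} (hl : 0 ≤ l)
    (h : HasDerivAt γ (γ' (t - clampTime t₀ l t)) (t - clampTime t₀ l t)) :
    HasDerivAt (insPath t₀ l (γ' t₀) γ) (γ' (t - clampTime t₀ l t)) t := by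
  rw [hasDerivAt_iff_isLittleO] at h ⊢
  have hc : Continuous (fun τ => τ - clampTime t₀ l τ) := continuous_id.sub (clamp_cont t₀ l)
  have h1 := h.comp_tendsto (hc.tendsto t)
  have h2 : ((fun x' => x' - (t - clampTime t₀ l t)) ∘ fun τ => τ - clampTime t₀ l τ)
      =O[nhds t] (fun x' => x' - t) := by
    apply Asymptotics.IsBigO.of_bound 1
    refine Filter.Eventually.of_forall fun τ => ?_
    simpa using phi_lip hl τ t
  have h3 := h1.trans_isBigO h2
  refine h3.congr' ?_ Filter.EventuallyEq.rfl
  have key : ∀ᶠ τ in nhds t, (clampTime t₀ l τ - clampTime t₀ l t) •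
      (γ' t₀ - γ' (t - clampTime t₀ l t)) = 0 := by
    rcases lt_or_ge t t₀ with h | h
    · filter_upwards [Iio_mem_nhds h] with τ hτ
      rw [clamp_left h.le, clamp_left (le_of_lt hτ)]; simp
    · rcases le_or_gt t (t₀ + l) with h2 | h2
      · refine Filter.Eventually.of_forall fun τ => ?_
        rw [clamp_mid h h2]; simp
      · filter_upwards [Ioi_mem_nhds h2] with τ hτ
        rw [clamp_right hl h2.le, clamp_right hl (le_of_lt hτ)]; simp
  filter_upwards [key] with τ hτ
  simp only [Function.comp, insPath]
  rw [← sub_eq_zero, ← neg_eq_zero, ← hτ]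
  module

lemma ins_bc {s t₀ l : ℝ} {γ γ' : ℝ → E2} (hγ : IsBCPath s γ γ') (hl : 0 ≤ l)
    (h0 : t₀ ∈ Set.Icc 0 s) :
    IsBCPath (s + l) (insPath t₀ l (γ' t₀) γ) (insPath t₀ l 0 γ') := by
  obtain ⟨hs, hd, hc, hn, D, hD⟩ := hγ
  have e : insPath t₀ l 0 γ' = fun t => γ' (t - clampTime t₀ l t) := by
    funext t; simp [insPath]
  rw [e]
  refine ⟨by linarith, fun t ht => ins_hasDerivAt hl (hd _ (clamp_maps hl h0 ht)), ?_,
    fun t ht => hn _ (clamp_maps hl h0 ht), ?_⟩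
  · exact hc.comp (continuous_id.sub (clamp_cont t₀ l)).continuousOn
      (fun t ht => clamp_maps hl h0 ht)
  · classical
    refine ⟨D ∪ D.image (fun x => x + l) ∪ {t₀, t₀ + l}, fun t ht hnD => ?_⟩
    simp only [Finset.mem_union, Finset.mem_image, Finset.mem_insert, Finset.mem_singleton,
      not_or, not_exists, not_and] at hnD
    obtain ⟨⟨hn1, hn2⟩, hn3, hn4⟩ := hnD
    have hm := clamp_maps hl h0 ht
    rcases lt_or_gt_of_ne hn3 with h | h
    · rw [clamp_left h.le, sub_zero] at hm
      obtain ⟨a, ha, hda⟩ := hD t hm hn1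
      refine ⟨a, ha, hda.congr_of_eventuallyEq ?_⟩
      filter_upwards [Iio_mem_nhds h] with τ hτ
      rw [clamp_left (le_of_lt hτ), sub_zero]
    · rcases lt_or_gt_of_ne hn4 with h2 | h2
      · refine ⟨0, by simp, (hasDerivAt_const t (γ' t₀)).congr_of_eventuallyEq ?_⟩
        filter_upwards [Ioo_mem_nhds h h2] with τ hτ
        rw [clamp_mid hτ.1.le hτ.2.le]; simp
      · rw [clamp_right hl h2.le] at hm
        obtain ⟨a, ha, hda⟩ := hD (t - l) hm (fun hh => hn2 _ hh (by ring))
        refine ⟨a, ha, (hda.comp_sub_const t l).congr_of_eventuallyEq ?_⟩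
        filter_upwards [Ioi_mem_nhds h2] with τ hτ
        rw [clamp_right hl (le_of_lt hτ)]

lemma free_of_antiparallel {s : ℝ} {γ γ' : ℝ → E2} (hγ : IsBCPath s γ γ') {t₁ t₂ : ℝ}
    (h1 : t₁ ∈ Set.Icc 0 s) (h2 : t₂ ∈ Set.Icc 0 s) (h12 : t₁ < t₂) (hu : γ' t₂ = - γ' t₁) :
    IsFreePath s γ γ' := by
  intro L hL
  have hs : 0 ≤ s := hγ.1
  let H : ℝ → ℝ → E2 := fun p => insPath t₁ (p * L) (γ' t₁) (insPath t₂ (p * L) (γ' t₂) γ)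
  let H' : ℝ → ℝ → E2 := fun p => insPath t₁ (p * L) 0 (insPath t₂ (p * L) 0 γ')
  have hz : ∀ t₀ t, clampTime t₀ 0 t = 0 := by
    intro t₀ t; unfold clampTime; exact max_eq_left (min_le_left _ _)
  refine ⟨s + L + L, H 1, H' 1, by linarith, fun p => s + p * L + p * L, H, H', ⟨?_, ?_, ?_⟩,
    by simp, by simp, ?_, ?_, fun _ _ => rfl, fun _ _ => rfl⟩
  · intro p hp
    have hl : 0 ≤ p * L := mul_nonneg hp.1 hL.le
    have b1 := ins_bc hγ hl h2
    have b2 := ins_bc (t₀ := t₁) b1 hl ⟨h1.1, by linarith [h1.2]⟩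
    have e : insPath t₂ (p * L) 0 γ' t₁ = γ' t₁ := by simp [insPath, clamp_left h12.le]
    rw [e] at b2
    refine ⟨b2, ?_, ?_, ?_, ?_⟩
    · simp [H, insPath, clamp_left h1.1, clamp_left h2.1]
    · simp [H', insPath, clamp_left h1.1, clamp_left h2.1]
    · have e1 : clampTime t₁ (p * L) (s + p * L + p * L) = p * L :=
        clamp_right hl (by linarith [h1.2])
      have e2 : clampTime t₂ (p * L) (s + p * L) = p * L :=
        clamp_right hl (by linarith [h2.2])
      simp [H, insPath, e1, e2, hu]
    · have e1 : clampTime t₁ (p * L) (s + p * L + p * L) = p * L :=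
        clamp_right hl (by linarith [h1.2])
      have e2 : clampTime t₂ (p * L) (s + p * L) = p * L :=
        clamp_right hl (by linarith [h2.2])
      simp [H', insPath, e1, e2]
  · fun_prop
  · have hc : ContinuousOn γ (Set.Icc 0 s) := fun t ht => (hγ.2.1 t ht).continuousAt.continuousWithinAt
    have c1 : Continuous (fun q : ℝ × ℝ =>
        clampTime t₁ (q.1 * L) (q.2 * (s + q.1 * L + q.1 * L))) := by
      unfold clampTime; fun_prop
    have c2 : Continuous (fun q : ℝ × ℝ => clampTime t₂ (q.1 * L)
        (q.2 * (s + q.1 * L + q.1 * L) -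
          clampTime t₁ (q.1 * L) (q.2 * (s + q.1 * L + q.1 * L)))) := by
      unfold clampTime; fun_prop
    simp only [H, insPath]
    refine ContinuousOn.add (ContinuousOn.add (hc.comp ?_ ?_) ?_) ?_
    · exact Continuous.continuousOn (by fun_prop)
    · rintro ⟨p, q⟩ ⟨hp, hq⟩
      have hl : 0 ≤ p * L := mul_nonneg hp.1 hL.le
      apply clamp_maps hl h2
      apply clamp_maps hl ⟨h1.1, by linarith [h1.2]⟩
      simp only at hq ⊢
      have : 0 ≤ s + p * L + p * L := by linarith
      exact ⟨mul_nonneg hq.1 this, by nlinarith [hq.2]⟩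
    · exact Continuous.continuousOn (by fun_prop)
    · exact Continuous.continuousOn (by fun_prop)
  · intro t _
    simp [H, insPath, hz]
  · intro t _
    simp [H', insPath, hz]

lemma coord_deriv {γ : ℝ → E2} {v : E2} {t : ℝ} (h : HasDerivAt γ v t) (i : Fin 2) :
    HasDerivAt (fun τ => γ τ i) (v i) t :=
  (EuclideanSpace.proj (𝕜 := ℝ) i : E2 →L[ℝ] ℝ).hasFDerivAt.comp_hasDerivAt t h

lemma arc_antiparallel {s : ℝ} {γ γ' : ℝ → E2} (hγ : IsBCPath s γ γ') {t₁ t₂ : ℝ}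
    (h1 : t₁ ∈ Set.Icc 0 s) (h2 : t₂ ∈ Set.Icc 0 s) (h12 : t₁ < t₂) {c : E2} {r : ℝ}
    (hr : 1 ≤ r) (hlen : t₂ = t₁ + Real.pi * r)
    (hc : ∀ t ∈ Set.Icc t₁ t₂, dist (γ t) c = r) : γ' t₂ = - γ' t₁ := by
  obtain ⟨hs, hd, hcont, hn, -⟩ := hγ
  have hsub : Set.Icc t₁ t₂ ⊆ Set.Icc 0 s := Set.Icc_subset_Icc h1.1 h2.2
  have hr0 : r ≠ 0 := by linarith
  have hrp : 0 < r := by linarith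
  have da : ∀ t ∈ Set.Icc t₁ t₂, HasDerivAt (fun τ => γ τ 0 - c 0) (γ' t 0) t :=
    fun t ht => (coord_deriv (hd t (hsub ht)) 0).sub_const _
  have db : ∀ t ∈ Set.Icc t₁ t₂, HasDerivAt (fun τ => γ τ 1 - c 1) (γ' t 1) t :=
    fun t ht => (coord_deriv (hd t (hsub ht)) 1).sub_const _
  have hcirc : ∀ t ∈ Set.Icc t₁ t₂, (γ t 0 - c 0) ^ 2 + (γ t 1 - c 1) ^ 2 = r ^ 2 := by
    intro t ht
    have := hc t ht
    rw [EuclideanSpace.dist_eq, Real.sqrt_eq_iff_mul_self_eq_of_pos hrp] at this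
    simp only [Fin.sum_univ_two, Real.dist_eq, sq_abs] at this
    linarith
  have hunit : ∀ t ∈ Set.Icc t₁ t₂, (γ' t 0) ^ 2 + (γ' t 1) ^ 2 = 1 := by
    intro t ht
    have := hn t (hsub ht)
    rw [EuclideanSpace.norm_eq, Real.sqrt_eq_iff_mul_self_eq_of_pos one_pos] at this
    simp only [Fin.sum_univ_two, Real.norm_eq_abs, sq_abs] at this
    linarith
  have horth : ∀ t ∈ Set.Icc t₁ t₂,
      (γ t 0 - c 0) * γ' t 0 + (γ t 1 - c 1) * γ' t 1 = 0 := by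
    intro t ht
    have hq := ((da t ht).pow 2).add ((db t ht).pow 2)
    have hq' := hq.hasDerivWithinAt (s := Set.Icc t₁ t₂)
    have hk : HasDerivWithinAt (fun _ : ℝ => r ^ 2) 0 (Set.Icc t₁ t₂) t :=
      hasDerivWithinAt_const _ _ _
    have hk' := hk.congr (f₁ := (fun τ => γ τ 0 - c 0) ^ 2 + (fun τ => γ τ 1 - c 1) ^ 2)
      (fun τ hτ => by simpa using hcirc τ hτ) (by simpa using hcirc t ht)
    have := (uniqueDiffOn_Icc h12 t ht).eq_deriv _ hq' hk'
    simp at this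
    linarith
  have hcγ' : ∀ i, ContinuousOn (fun t => γ' t i) (Set.Icc t₁ t₂) := fun i =>
    (EuclideanSpace.proj (𝕜 := ℝ) i : E2 →L[ℝ] ℝ).continuous.comp_continuousOn (hcont.mono hsub)
  have ca : ContinuousOn (fun τ => γ τ 0 - c 0) (Set.Icc t₁ t₂) :=
    fun t ht => (da t ht).continuousAt.continuousWithinAt
  have cb : ContinuousOn (fun τ => γ τ 1 - c 1) (Set.Icc t₁ t₂) :=
    fun t ht => (db t ht).continuousAt.continuousWithinAt
  have hf : ContinuousOn (fun t => (γ t 0 - c 0) * γ' t 1 - (γ t 1 - c 1) * γ' t 0)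
      (Set.Icc t₁ t₂) := (ca.mul (hcγ' 1)).sub (cb.mul (hcγ' 0))
  have hsq : ∀ t ∈ Set.Icc t₁ t₂,
      ((γ t 0 - c 0) * γ' t 1 - (γ t 1 - c 1) * γ' t 0) ^ 2 = r ^ 2 := by
    intro t ht
    have e1 := hcirc t ht
    have e2 := hunit t ht
    have e3 := horth t ht
    calc _ = ((γ t 0 - c 0) ^ 2 + (γ t 1 - c 1) ^ 2) * ((γ' t 0) ^ 2 + (γ' t 1) ^ 2)
        - ((γ t 0 - c 0) * γ' t 0 + (γ t 1 - c 1) * γ' t 1) ^ 2 := by ring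
      _ = r ^ 2 := by rw [e1, e2, e3]; ring
  have hsign : ∃ ε : ℝ, ε ^ 2 = 1 ∧ ∀ t ∈ Set.Icc t₁ t₂,
      (γ t 0 - c 0) * γ' t 1 - (γ t 1 - c 1) * γ' t 0 = ε * r := by
    rcases isPreconnected_Icc.eq_or_eq_neg_of_sq_eq hf
      (continuousOn_const (c := r)) (fun t ht => by simpa using hsq t ht)
      (fun _ => hr0) with h | h
    · exact ⟨1, by norm_num, fun t ht => by simpa using h ht⟩
    · exact ⟨-1, by norm_num, fun t ht => by simpa using h ht⟩
  obtain ⟨ε, hε, hfe⟩ := hsign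
  have g0 : ∀ t ∈ Set.Icc t₁ t₂, γ' t 0 = -(ε / r) * (γ t 1 - c 1) := by
    intro t ht
    have e1 := hcirc t ht
    have e3 := horth t ht
    have e4 := hfe t ht
    field_simp
    apply mul_left_cancel₀ hr0
    linear_combination (-γ' t 0) * e1 + (γ t 0 - c 0) * e3 - (γ t 1 - c 1) * e4
  have g1 : ∀ t ∈ Set.Icc t₁ t₂, γ' t 1 = (ε / r) * (γ t 0 - c 0) := by
    intro t ht
    have e1 := hcirc t ht
    have e3 := horth t ht
    have e4 := hfe t ht
    field_simp
    apply mul_left_cancel₀ hr0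
    linear_combination (-γ' t 1) * e1 + (γ t 1 - c 1) * e3 + (γ t 0 - c 0) * e4
  have dcos : ∀ t, HasDerivAt (fun τ => Real.cos ((τ - t₁) / r)) (-Real.sin ((t - t₁) / r) * (1 / r)) t :=
    fun t => (((hasDerivAt_id t).sub_const t₁).div_const r).cos
  have dsin : ∀ t, HasDerivAt (fun τ => Real.sin ((τ - t₁) / r)) (Real.cos ((t - t₁) / r) * (1 / r)) t :=
    fun t => (((hasDerivAt_id t).sub_const t₁).div_const r).sin
  have hpi : (t₂ - t₁) / r = Real.pi := by rw [hlen]; field_simp; ring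
  have m1 : t₁ ∈ Set.Icc t₁ t₂ := Set.left_mem_Icc.2 h12.le
  have m2 : t₂ ∈ Set.Icc t₁ t₂ := Set.right_mem_Icc.2 h12.le
  have w0 : γ t₂ 0 - c 0 = -(γ t₁ 0 - c 0) := by
    have dw : ∀ t ∈ Set.Icc t₁ t₂, HasDerivAt (fun τ => Real.cos ((τ - t₁) / r) * (γ τ 0 - c 0)
        + ε * (Real.sin ((τ - t₁) / r) * (γ τ 1 - c 1))) 0 t := by
      intro t ht
      refine HasDerivAt.congr_deriv (((dcos t).mul (da t ht)).add (((dsin t).mul (db t ht)).const_mul ε)) ?_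
      rw [g0 t ht, g1 t ht]
      field_simp
      linear_combination (Real.sin ((t - t₁) / r) * (γ t 0 - c 0)) * hε
    have := constant_of_has_deriv_right_zero
      (fun t ht => (dw t ht).continuousAt.continuousWithinAt)
      (fun t ht => (dw t (Set.Ico_subset_Icc_self ht)).hasDerivWithinAt) t₂ m2
    simp [hpi] at this
    linarith
  have w1 : γ t₂ 1 - c 1 = -(γ t₁ 1 - c 1) := by
    have dw : ∀ t ∈ Set.Icc t₁ t₂, HasDerivAt (fun τ => Real.cos ((τ - t₁) / r) * (γ τ 1 - c 1)
        - ε * (Real.sin ((τ - t₁) / r) * (γ τ 0 - c 0))) 0 t := by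
      intro t ht
      refine HasDerivAt.congr_deriv (((dcos t).mul (db t ht)).sub (((dsin t).mul (da t ht)).const_mul ε)) ?_
      rw [g0 t ht, g1 t ht]
      field_simp
      linear_combination (Real.sin ((t - t₁) / r) * (γ t 1 - c 1)) * hε
    have := constant_of_has_deriv_right_zero
      (fun t ht => (dw t ht).continuousAt.continuousWithinAt)
      (fun t ht => (dw t (Set.Ico_subset_Icc_self ht)).hasDerivWithinAt) t₂ m2
    simp [hpi] at this
    linarith
  ext i
  fin_cases i
  · simp only [Fin.zero_eta, PiLp.neg_apply]
    rw [g0 t₂ m2, g0 t₁ m1, w1]; ring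
  · simp only [Fin.mk_one, PiLp.neg_apply]
    rw [g1 t₂ m2, g1 t₁ m1, w0]; ring

/-- Every bounded curvature path containing as a subpath an arc of a
circle of radius `r ≥ 1` of length at least `π r` is a free path. -/
theorem bc_path_with_long_arc_is_free (s : ℝ) (γ γ' : ℝ → E2)
    (hγ : IsBCPath s γ γ')
    (harc : ∃ t₁ ∈ Set.Icc 0 s, ∃ t₂ ∈ Set.Icc 0 s, ∃ c : E2, ∃ r : ℝ,
      1 ≤ r ∧ t₁ < t₂ ∧ Real.pi * r ≤ t₂ - t₁ ∧
      ∀ t ∈ Set.Icc t₁ t₂, dist (γ t) c = r) :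
    IsFreePath s γ γ' := by
  obtain ⟨t₁, h1, t₂, h2, c, r, hr, h12, hlen, hc⟩ := harc
  have hp : 0 < Real.pi * r := mul_pos Real.pi_pos (by linarith)
  have h3 : t₁ + Real.pi * r ∈ Set.Icc 0 s := ⟨by linarith [h1.1], by linarith [h2.2]⟩
  exact free_of_antiparallel hγ h1 h3 (by linarith)
    (arc_antiparallel hγ h1 h3 (by linarith) hr rfl
      (fun t ht => hc t ⟨ht.1, by linarith [ht.2]⟩))
end
end

section
/- Let 𝔻 be a closed disk of radius 1 in ℝ². If a bounded curvature path γ : [0, s] → ℝ² has its image contained in 𝔻 and there exists an interior parameter p ∈ (0, s) with γ(p) on the boundary circle ∂𝔻, then γ(t) ∈ ∂𝔻 for every t ∈ [0, s], i.e., the path lies entirely in the boundary circle. -/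
noncomputable section

/-- A continuous function with nonnegative derivative off a finite set does not decrease. -/
theorem le_of_deriv_nonneg_off_finset (h : ℝ → ℝ) (D : Finset ℝ) :
    ∀ a b : ℝ, a ≤ b → ContinuousOn h (Set.Icc a b) →
      (∀ t ∈ Set.Ioo a b, t ∉ D → ∃ c : ℝ, 0 ≤ c ∧ HasDerivAt h c t) → h a ≤ h b := by
  induction D using Finset.induction_on with
  | empty =>
    intro a b hab hc hd
    have hm : MonotoneOn h (Set.Icc a b) := by
      apply monotoneOn_of_deriv_nonneg (convex_Icc a b) hc
      · intro t ht
        rw [interior_Icc] at ht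
        obtain ⟨c, _, h2⟩ := hd t ht (by simp)
        exact h2.differentiableAt.differentiableWithinAt
      · intro t ht
        rw [interior_Icc] at ht
        obtain ⟨c, h1, h2⟩ := hd t ht (by simp)
        rw [h2.deriv]; exact h1
    exact hm ⟨le_refl a, hab⟩ ⟨hab, le_refl b⟩ hab
  | insert d D _ ih =>
    intro a b hab hc hd
    by_cases hdm : d ∈ Set.Ioo a b
    · refine (ih a d hdm.1.le (hc.mono (Set.Icc_subset_Icc le_rfl hdm.2.le)) ?_).trans
        (ih d b hdm.2.le (hc.mono (Set.Icc_subset_Icc hdm.1.le le_rfl)) ?_)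
      · intro t ht htD
        exact hd t ⟨ht.1, ht.2.trans hdm.2⟩ (by simp [htD, ht.2.ne])
      · intro t ht htD
        exact hd t ⟨hdm.1.trans ht.1, ht.2⟩ (by simp [htD, ht.1.ne'])
    · apply ih a b hab hc
      intro t ht htD
      refine hd t ht ?_
      rw [Finset.mem_insert, not_or]
      exact ⟨fun e => hdm (e ▸ ht), htD⟩

/-- If a bounded curvature path has image contained in a closed unit
disk `𝔻` and touches the boundary circle `∂𝔻` at some interior parameter, then it lies
entirely in `∂𝔻`. -/
theorem bc_path_in_unit_disk_touching_boundary_lies_on_boundary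
    (s : ℝ) (γ γ' : ℝ → E2) (o : E2)
    (hγ : IsBCPath s γ γ')
    (himg : ∀ t ∈ Set.Icc 0 s, γ t ∈ Metric.closedBall o 1)
    (p : ℝ) (hp : p ∈ Set.Ioo 0 s) (hpb : γ p ∈ Metric.sphere o 1) :
    ∀ t ∈ Set.Icc 0 s, γ t ∈ Metric.sphere o 1 := by
  obtain ⟨_, hd, hcont, hunit, D, hD⟩ := hγ
  have hr : ∀ t ∈ Set.Icc 0 s, ‖γ t - o‖ ≤ 1 := fun t ht => by
    simpa [dist_eq_norm] using himg t ht
  have hp1 : ‖γ p - o‖ = 1 := by simpa [dist_eq_norm] using hpb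
  have hpI : p ∈ Set.Icc 0 s := Set.Ioo_subset_Icc_self hp
  let h : ℝ → ℝ := fun t => inner ℝ (γ t - o) (γ' t)
  let g : ℝ → ℝ := fun t => ‖γ t - o‖ ^ 2
  have hdr : ∀ t ∈ Set.Icc 0 s, HasDerivAt (fun t => γ t - o) (γ' t) t := fun t ht =>
    (hd t ht).sub_const o
  have hdg : ∀ t ∈ Set.Icc 0 s, HasDerivAt g (2 * h t) t := fun t ht => (hdr t ht).norm_sq
  have hch : ContinuousOn h (Set.Icc 0 s) := by
    refine ContinuousOn.inner (𝕜 := ℝ) (f := fun t => γ t - o) ?_ hcont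
    exact fun t ht => (hdr t ht).continuousAt.continuousWithinAt
  have hmono : ∀ a ∈ Set.Icc 0 s, ∀ b ∈ Set.Icc 0 s, a ≤ b → h a ≤ h b := by
    intro a ha b hb hab
    apply le_of_deriv_nonneg_off_finset h D a b hab (hch.mono (Set.Icc_subset_Icc ha.1 hb.2))
    intro t ht htD
    have htI : t ∈ Set.Icc 0 s := ⟨ha.1.trans ht.1.le, ht.2.le.trans hb.2⟩
    obtain ⟨c, hc1, hc2⟩ := hD t htI htD
    refine ⟨_, ?_, (hdr t htI).inner ℝ hc2⟩
    have h1 := abs_real_inner_le_norm (γ t - o) c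
    have h2 : ‖γ t - o‖ * ‖c‖ ≤ 1 :=
      mul_le_one₀ (hr t htI) (norm_nonneg _) hc1
    have h3 := (abs_le.1 (h1.trans h2)).1
    rw [real_inner_self_eq_norm_sq, hunit t htI]
    linarith
  have hgle : ∀ t ∈ Set.Icc 0 s, g t ≤ 1 := fun t ht =>
    pow_le_one₀ (norm_nonneg _) (hr t ht)
  have hgp : g p = 1 := by simp [g, hp1]
  have hhp : h p = 0 := by
    have hm : IsLocalMax g p := by
      filter_upwards [Icc_mem_nhds hp.1 hp.2] with t ht
      rw [hgp]; exact hgle t ht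
    have := hm.hasDerivAt_eq_zero (hdg p hpI)
    linarith
  have hge : ∀ t ∈ Set.Icc 0 s, 1 ≤ g t := by
    intro t ht
    rcases le_total p t with hpt | htp
    · rw [← hgp]
      apply le_of_deriv_nonneg_off_finset g ∅ p t hpt
      · exact fun u hu =>
          (hdg u ⟨hpI.1.trans hu.1, hu.2.trans ht.2⟩).continuousAt.continuousWithinAt
      · intro u hu _
        have huI : u ∈ Set.Icc 0 s := ⟨hpI.1.trans hu.1.le, hu.2.le.trans ht.2⟩
        exact ⟨_, by linarith [hmono p hpI u huI hu.1.le], hdg u huI⟩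
    · have := le_of_deriv_nonneg_off_finset (fun u => - g u) ∅ t p htp
        (fun u hu =>
          (hdg u ⟨ht.1.trans hu.1, hu.2.trans hpI.2⟩).neg.continuousAt.continuousWithinAt)
        (by
          intro u hu _
          have huI : u ∈ Set.Icc 0 s := ⟨ht.1.trans hu.1.le, hu.2.le.trans hpI.2⟩
          exact ⟨_, by linarith [hmono u huI p hpI hu.2.le], (hdg u huI).neg⟩)
      simp only [hgp] at this
      linarith
  intro t ht
  have h1 := hge t ht
  have h2 := hr t ht
  have h3 : 1 ≤ ‖γ t - o‖ := by
    by_contra hlt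
    push Not at hlt
    have : ‖γ t - o‖ ^ 2 < 1 := pow_lt_one₀ (norm_nonneg _) hlt (by norm_num)
    exact absurd h1 (not_le.2 this)
  rw [mem_sphere_iff_norm]
  exact le_antisymm h2 h3
end
end

section
/- Let a₁, a₂, b₁, b₂, c₁, c₂ be points of ℝ² with dist(a₁, a₂) = 2, dist(b₁, b₂) = 2, dist(a₁, b₁) < 4 and dist(a₂, b₂) < 4. Suppose dist(c₁, a₁) = dist(c₁, b₁) = 2 and dist(c₂, a₂) = dist(c₂, b₂) = 2 (so the unit circle about c₁ is externally tangent to the unit circles about a₁ and b₁, and the unit circle about c₂ is externally tangent to the unit circles about a₂ and b₂), and suppose c₁ and c₂ lie in the interior of the convex hull of {a₁, a₂, b₁, b₂}. Then dist(c₁, c₂) < 2; that is, the two closed unit disks centered at c₁ and c₂ have intersecting interiors. -/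
noncomputable section

lemma aux_lemA {D ux uy px py : ℝ} (hD : 2 ≤ D) (hu : ux^2+uy^2=4) (hp : px^2+py^2=4)
    (h : (D+px-ux)^2+(py-uy)^2=4) (hux : ux < 0) (huy : 0 ≤ uy) : 0 ≤ py := by
  by_contra hc
  push Not at hc
  -- set P = D + px
  have h1 : (D+px)^2+py^2 = 2*(ux*(D+px)) + 2*(uy*py) := by nlinarith
  have h2 : uy*py ≤ 0 := mul_nonpos_of_nonneg_of_nonpos huy hc.le
  have h3 : 0 < ux*(D+px) := by nlinarith [sq_nonneg (D+px), mul_pos_of_neg_of_neg hc hc]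
  have h4 : D+px < 0 := by
    by_contra h5
    push Not at h5
    nlinarith
  nlinarith

set_option maxHeartbeats 1000000 in
lemma aux_core0 {D ux uy px py vx vy qx qy : ℝ} (hD : 2 ≤ D)
    (hu : ux^2+uy^2=4) (hp : px^2+py^2=4) (hv : vx^2+vy^2=4) (hq : qx^2+qy^2=4)
    (hup : (D+px-ux)^2+(py-uy)^2=4) (hvq : (D+qx-vx)^2+(qy-vy)^2=4)
    (hux : ux < 0) (hqx : 0 < qx) (huy : 0 ≤ uy)
    (H1 : ∀ g h : ℝ, (g ≠ 0 ∨ h ≠ 0) → 0 < g*ux+h*uy ∨ 0 < g*(D+px)+h*py ∨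
      0 < g*vx+h*vy ∨ 0 < g*(D+qx)+h*qy)
    (H2 : ∀ g h : ℝ, (g ≠ 0 ∨ h ≠ 0) → 0 < g*(ux-D)+h*uy ∨ 0 < g*px+h*py ∨
      0 < g*(vx-D)+h*vy ∨ 0 < g*qx+h*qy) : False := by
  have hpy := aux_lemA hD hu hp hup hux huy
  have hpu : px ≤ ux := by nlinarith [sq_nonneg (py-uy)]
  have hvq' : qx ≤ vx := by nlinarith [sq_nonneg (qy-vy)]
  have hpx2 : -2 ≤ px := by nlinarith [sq_nonneg py]
  have hvx2 : vx ≤ 2 := by nlinarith [sq_nonneg vy]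
  rcases le_or_gt 0 qy with hqy | hqy
  · have hvy : 0 ≤ vy := aux_lemA (D := D) (ux := -qx) (uy := qy) (px := -vx) (py := vy) hD
      (by linarith) (by linarith) (by linarith) (by linarith) hqy
    rcases H1 0 (-1) (by norm_num) with h | h | h | h <;> linarith
  · have hvy : 0 ≤ -vy := aux_lemA (D := D) (ux := -qx) (uy := -qy) (px := -vx) (py := -vy) hD
      (by linarith) (by linarith) (by linarith) (by linarith) (by linarith)
    have hpyu : py ≤ uy := by
      by_contra hh; push Not at hh
      linarith [mul_nonneg (by linarith : 0 ≤ ux-px) (by linarith : 0 ≤ -ux-px), mul_nonneg (by linarith : 0 ≤ py - uy) huy, mul_pos (by linarith : 0 < py-uy) (by linarith : 0 < py)]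
    have hvyq : -vy ≤ -qy := by
      by_contra hh; push Not at hh
      linarith [mul_nonneg (by linarith : 0 ≤ vx-qx) (by linarith : 0 ≤ vx+qx), mul_pos (by linarith : 0 < qy - vy) (by linarith : 0 < -vy-qy)]
    rcases le_total 0 (qx*uy - qy*ux) with hs | hs
    · rcases H1 (-uy) ux (Or.inr hux.ne) with h | h | h | h
      · linarith
      · linarith [mul_nonneg huy (by linarith : 0 ≤ D+px), mul_nonneg hpy (by linarith : 0 ≤ -ux)]
      · linarith [mul_nonneg huy (by linarith : 0 ≤ vx-qx),
          mul_nonneg (by linarith : 0 ≤ -ux) (by linarith : 0 ≤ vy - qy)]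
      · linarith [mul_nonneg huy (by linarith : 0 ≤ D)]
    · rcases H2 (-qy) qx (Or.inr hqx.ne') with h | h | h | h
      · linarith [mul_nonneg (by linarith : 0 ≤ -qy) (by linarith : 0 ≤ D)]
      · linarith [mul_nonneg (by linarith : 0 ≤ -qy) (by linarith : 0 ≤ ux - px),
          mul_nonneg hqx.le (by linarith : 0 ≤ uy - py)]
      · linarith [mul_nonneg (by linarith : 0 ≤ -qy) (by linarith : 0 ≤ D-vx),
          mul_nonneg hqx.le hvy]
      · linarith

lemma aux_core1 {D ux uy px py vx vy qx qy : ℝ} (hD : 2 ≤ D)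
    (hu : ux^2+uy^2=4) (hp : px^2+py^2=4) (hv : vx^2+vy^2=4) (hq : qx^2+qy^2=4)
    (hup : (D+px-ux)^2+(py-uy)^2=4) (hvq : (D+qx-vx)^2+(qy-vy)^2=4)
    (hux : ux < 0) (hqx : 0 < qx)
    (H1 : ∀ g h : ℝ, (g ≠ 0 ∨ h ≠ 0) → 0 < g*ux+h*uy ∨ 0 < g*(D+px)+h*py ∨
      0 < g*vx+h*vy ∨ 0 < g*(D+qx)+h*qy)
    (H2 : ∀ g h : ℝ, (g ≠ 0 ∨ h ≠ 0) → 0 < g*(ux-D)+h*uy ∨ 0 < g*px+h*py ∨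
      0 < g*(vx-D)+h*vy ∨ 0 < g*qx+h*qy) : False := by
  rcases le_total 0 uy with huy | huy
  · exact aux_core0 hD hu hp hv hq hup hvq hux hqx huy H1 H2
  · refine aux_core0 (D := D) (ux := ux) (uy := -uy) (px := px) (py := -py) (vx := vx) (vy := -vy)
      (qx := qx) (qy := -qy) hD (by linarith) (by linarith) (by linarith) (by linarith)
      (by linarith) (by linarith) hux hqx (by linarith) ?_ ?_
    · intro g h hgh
      have := H1 g (-h) (by simpa using hgh)
      simpa using this
    · intro g h hgh
      have := H2 g (-h) (by simpa using hgh)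
      simpa using this

lemma aux_core2 {D ux uy px py vx vy qx qy : ℝ} (hD : 2 ≤ D)
    (hu : ux^2+uy^2=4) (hp : px^2+py^2=4) (hv : vx^2+vy^2=4) (hq : qx^2+qy^2=4)
    (hup : (D+px-ux)^2+(py-uy)^2=4) (hvq : (D+qx-vx)^2+(qy-vy)^2=4)
    (H1 : ∀ g h : ℝ, (g ≠ 0 ∨ h ≠ 0) → 0 < g*ux+h*uy ∨ 0 < g*(D+px)+h*py ∨
      0 < g*vx+h*vy ∨ 0 < g*(D+qx)+h*qy)
    (H2 : ∀ g h : ℝ, (g ≠ 0 ∨ h ≠ 0) → 0 < g*(ux-D)+h*uy ∨ 0 < g*px+h*py ∨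
      0 < g*(vx-D)+h*vy ∨ 0 < g*qx+h*qy) : False := by
  have b1 : -2 ≤ px := by nlinarith [sq_nonneg py]
  have b2 : -2 ≤ qx := by nlinarith [sq_nonneg qy]
  have b3 : ux ≤ 2 := by nlinarith [sq_nonneg uy]
  have b4 : vx ≤ 2 := by nlinarith [sq_nonneg vy]
  have b5 : D+px-ux ≤ 2 := by nlinarith [sq_nonneg (py-uy)]
  have b6 : D+qx-vx ≤ 2 := by nlinarith [sq_nonneg (qy-vy)]
  have h1 : ux < 0 ∨ vx < 0 := by
    rcases H1 (-1) 0 (by norm_num) with h | h | h | h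
    · left; linarith
    · linarith
    · right; linarith
    · linarith
  have h2 : 0 < px ∨ 0 < qx := by
    rcases H2 1 0 (by norm_num) with h | h | h | h
    · linarith
    · left; linarith
    · linarith
    · right; linarith
  have sw : ∀ {A B C E : Prop}, (A ∨ B ∨ C ∨ E) → (C ∨ E ∨ A ∨ B) := by tauto
  rcases h1 with h1 | h1 <;> rcases h2 with h2 | h2
  · linarith
  · exact aux_core1 hD hu hp hv hq hup hvq h1 h2 H1 H2
  · exact aux_core1 hD hv hq hu hp hvq hup h1 h2 (fun g h e => sw (H1 g h e))
      (fun g h e => sw (H2 g h e))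
  · linarith

lemma aux_interior {a b c d z : E2} (hz : z ∈ interior (convexHull ℝ ({a, b, c, d} : Set E2)))
    (g h : ℝ) (hgh : 0 < g^2+h^2) :
    0 < g*(a 0 - z 0)+h*(a 1 - z 1) ∨ 0 < g*(b 0 - z 0)+h*(b 1 - z 1) ∨
    0 < g*(c 0 - z 0)+h*(c 1 - z 1) ∨ 0 < g*(d 0 - z 0)+h*(d 1 - z 1) := by
  by_contra hc
  push Not at hc
  obtain ⟨ha, hb, hc, hd⟩ := hc
  let T : Set E2 := {p | g*(p 0 - z 0)+h*(p 1 - z 1) ≤ 0}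
  have hT : Convex ℝ T := by
    intro x hx y hy s t hs ht hst
    simp only [T, Set.mem_setOf_eq, PiLp.add_apply, PiLp.smul_apply, smul_eq_mul] at hx hy ⊢
    have : s = 1 - t := by linarith
    subst this
    nlinarith [mul_nonneg hs (neg_nonneg.2 hx), mul_nonneg ht (neg_nonneg.2 hy)]
  have hsub : convexHull ℝ ({a, b, c, d} : Set E2) ⊆ T := by
    apply convexHull_min _ hT
    intro x hx
    simp only [Set.mem_insert_iff, Set.mem_singleton_iff] at hx
    rcases hx with rfl | rfl | rfl | rfl <;> assumption
  have hn : T ∈ nhds z := Filter.mem_of_superset (mem_interior_iff_mem_nhds.1 hz) hsub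
  have hcont : Filter.Tendsto (fun t : ℝ => z + t • (!₂[g, h] : E2)) (nhds 0) (nhds z) := by
    have : Continuous (fun t : ℝ => z + t • (!₂[g, h] : E2)) := by fun_prop
    have h0 := this.tendsto 0
    simpa using h0
  have hev := hcont hn
  obtain ⟨ε, hε, hball⟩ := Metric.mem_nhds_iff.1 hev
  have hm : (ε/2) ∈ Metric.ball (0:ℝ) ε := by
    rw [Metric.mem_ball, Real.dist_eq, sub_zero, abs_of_pos (by positivity)]; linarith
  have := hball hm
  simp [T] at this
  nlinarith [mul_pos hε hgh]

lemma aux_dist_sq (x y : E2) : dist x y ^ 2 = (x 0 - y 0)^2 + (x 1 - y 1)^2 := by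
  rw [EuclideanSpace.dist_eq, Real.sq_sqrt (by positivity)]
  simp [Real.dist_eq, sq_abs]

/-- Let `a₁, a₂` and `b₁, b₂` be the centers of the adjacent unit
circles at the initial and final points (so `dist a₁ a₂ = 2 = dist b₁ b₂`), satisfying
the condition-D inequalities `dist a₁ b₁ < 4` and `dist a₂ b₂ < 4`.  If `c₁, c₂` are
centers of unit circles externally tangent to the corresponding pairs of adjacent
circles (`dist c₁ a₁ = dist c₁ b₁ = 2` and `dist c₂ a₂ = dist c₂ b₂ = 2`) and lie in
the interior of the convex hull of `{a₁, a₂, b₁, b₂}`, then `dist c₁ c₂ < 2`: the two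
unit disks centered at `c₁` and `c₂` have intersecting interiors. -/
theorem middle_arc_disks_intersect (a₁ a₂ b₁ b₂ c₁ c₂ : E2)
    (ha : dist a₁ a₂ = 2) (hb : dist b₁ b₂ = 2)
    (hab₁ : dist a₁ b₁ < 4) (hab₂ : dist a₂ b₂ < 4)
    (hc₁a : dist c₁ a₁ = 2) (hc₁b : dist c₁ b₁ = 2)
    (hc₂a : dist c₂ a₂ = 2) (hc₂b : dist c₂ b₂ = 2)
    (hc₁ : c₁ ∈ interior (convexHull ℝ ({a₁, a₂, b₁, b₂} : Set E2)))
    (hc₂ : c₂ ∈ interior (convexHull ℝ ({a₁, a₂, b₁, b₂} : Set E2))) :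
    dist c₁ c₂ < 2 := by
  by_contra hN
  push Not at hN
  obtain ⟨N, hNd⟩ : ∃ N, N = dist c₁ c₂ := ⟨_, rfl⟩
  rw [← hNd] at hN
  have sa := aux_dist_sq a₁ a₂
  have sb := aux_dist_sq b₁ b₂
  have s1a := aux_dist_sq c₁ a₁
  have s1b := aux_dist_sq c₁ b₁
  have s2a := aux_dist_sq c₂ a₂
  have s2b := aux_dist_sq c₂ b₂
  have sN := aux_dist_sq c₁ c₂
  rw [ha] at sa
  rw [hb] at sb
  rw [hc₁a] at s1a
  rw [hc₁b] at s1b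
  rw [hc₂a] at s2a
  rw [hc₂b] at s2b
  rw [← hNd] at sN
  have I1 := aux_interior hc₁
  have I2 := aux_interior hc₂
  have hN0 : N ≠ 0 := by linarith
  obtain ⟨e, he⟩ : ∃ e, e = (c₂ 0 - c₁ 0)/N := ⟨_, rfl⟩
  obtain ⟨f, hf⟩ : ∃ f, f = (c₂ 1 - c₁ 1)/N := ⟨_, rfl⟩
  have he' : c₂ 0 = c₁ 0 + N*e := by rw [he]; field_simp; ring
  have hf' : c₂ 1 = c₁ 1 + N*f := by rw [hf]; field_simp; ring
  rw [he', hf'] at sN s2a s2b I2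
  have hef : e^2+f^2 = 1 := by
    have : N^2*(e^2+f^2) = N^2*1 := by linarith
    exact mul_left_cancel₀ (pow_ne_zero 2 hN0) this
  clear he hf he' hf' hc₁ hc₂
  generalize a₁ 0 = A0 at *
  generalize a₁ 1 = A1 at *
  generalize a₂ 0 = B0 at *
  generalize a₂ 1 = B1 at *
  generalize b₁ 0 = C0 at *
  generalize b₁ 1 = C1 at *
  generalize b₂ 0 = F0 at *
  generalize b₂ 1 = F1 at *
  generalize c₁ 0 = z0 at *
  generalize c₁ 1 = z1 at *
  have hf2 : f^2 = 1 - e^2 := by linarith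
  have pos : ∀ g h : ℝ, (g ≠ 0 ∨ h ≠ 0) → 0 < (g*e-h*f)^2+(g*f+h*e)^2 := by
    intro g h hgh
    have : (g*e-h*f)^2+(g*f+h*e)^2 = g^2+h^2 := by linear_combination (g^2+h^2)*hef
    rw [this]
    rcases hgh with h | h <;> positivity
  have rot : ∀ x y : ℝ, (x*e+y*f)^2+(-x*f+y*e)^2 = x^2+y^2 := by
    intro x y; linear_combination (x^2+y^2)*hef
  refine aux_core2 (D := N) (ux := (A0-z0)*e+(A1-z1)*f) (uy := -(A0-z0)*f+(A1-z1)*e)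
    (px := (B0-(z0+N*e))*e+(B1-(z1+N*f))*f) (py := -(B0-(z0+N*e))*f+(B1-(z1+N*f))*e)
    (vx := (C0-z0)*e+(C1-z1)*f) (vy := -(C0-z0)*f+(C1-z1)*e)
    (qx := (F0-(z0+N*e))*e+(F1-(z1+N*f))*f) (qy := -(F0-(z0+N*e))*f+(F1-(z1+N*f))*e)
    hN ?_ ?_ ?_ ?_ ?_ ?_ ?_ ?_
  · rw [rot]; linarith
  · rw [rot]; linarith
  · rw [rot]; linarith
  · rw [rot]; linarith
  · have := rot (B0-A0) (B1-A1)
    have k : N + ((B0-(z0+N*e))*e+(B1-(z1+N*f))*f) - ((A0-z0)*e+(A1-z1)*f)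
      = (B0-A0)*e+(B1-A1)*f := by linear_combination (-N)*hef
    rw [k]; linarith
  · have := rot (F0-C0) (F1-C1)
    have k : N + ((F0-(z0+N*e))*e+(F1-(z1+N*f))*f) - ((C0-z0)*e+(C1-z1)*f)
      = (F0-C0)*e+(F1-C1)*f := by linear_combination (-N)*hef
    rw [k]; linarith
  · intro g h hgh
    rcases I1 _ _ (pos g h hgh) with k | k | k | k
    · left; linarith
    · right; left; convert k using 1; linear_combination (-g*N)*hef
    · right; right; left; linarith
    · right; right; right; convert k using 1; linear_combination (-g*N)*hef
  · intro g h hgh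
    rcases I2 _ _ (pos g h hgh) with k | k | k | k
    · left; convert k using 1; linear_combination (g*N)*hef
    · right; left; linarith
    · right; right; left; convert k using 1; linear_combination (g*N)*hef
    · right; right; right; linarith
end
end

section
/- Let 0 < b < 1 and let f : [0, b] → ℝ be twice continuously differentiable with f(0) = 0, f'(0) = 0, and f''(t) ≤ (1 + f'(t)²)^{3/2} for all t ∈ [0, b] (i.e., the curvature of the graph of f is at most 1). Then f(t) ≤ 1 − √(1 − t²) for all t ∈ [0, b]; that is, the graph of f stays on or below the lower arc of the unit circle centered at (0, 1). -/
noncomputable section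

theorem aux_le_zero (b : ℝ) (h h' : ℝ → ℝ)
    (hd : ∀ t ∈ Set.Icc 0 b, HasDerivAt h (h' t) t)
    (hn : ∀ t ∈ Set.Icc 0 b, h' t ≤ 0) : ∀ t ∈ Set.Icc 0 b, h t ≤ h 0 := by
  intro t ht
  have hanti : AntitoneOn h (Set.Icc 0 b) := by
    apply antitoneOn_of_deriv_nonpos (convex_Icc 0 b)
    · exact fun x hx => (hd x hx).continuousAt.continuousWithinAt
    · exact fun x hx => (hd x (interior_subset hx)).differentiableAt.differentiableWithinAt
    · intro x hx
      rw [(hd x (interior_subset hx)).deriv]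
      exact hn x (interior_subset hx)
  exact hanti ⟨le_refl 0, ht.1.trans ht.2⟩ ht ht.1

/-- Let `0 < b < 1` and let `f : [0, b] → ℝ` be twice continuously
differentiable (with first and second derivatives `f'` and `f''`, the latter
continuous), with `f 0 = 0`, `f' 0 = 0`, and with the curvature of its graph at most
`1`, i.e. `f'' t ≤ (1 + (f' t)²)^(3/2)` on `[0, b]`.  Then
`f t ≤ 1 - √(1 - t²)` on `[0, b]`: the graph of `f` stays on or below the lower arc of
the unit circle centered at `(0, 1)`. -/
theorem graph_with_curvature_at_most_one_stays_below_circle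
    (b : ℝ) (hb0 : 0 < b) (hb1 : b < 1)
    (f f' f'' : ℝ → ℝ)
    (hf' : ∀ t ∈ Set.Icc 0 b, HasDerivAt f (f' t) t)
    (hf'' : ∀ t ∈ Set.Icc 0 b, HasDerivAt f' (f'' t) t)
    (hf''cont : ContinuousOn f'' (Set.Icc 0 b))
    (hf0 : f 0 = 0) (hf'0 : f' 0 = 0)
    (hcurv : ∀ t ∈ Set.Icc 0 b, f'' t ≤ (1 + (f' t) ^ 2) ^ ((3 : ℝ) / 2)) :
    ∀ t ∈ Set.Icc 0 b, f t ≤ 1 - Real.sqrt (1 - t ^ 2) := by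
  have hg : ∀ t ∈ Set.Icc 0 b, f' t / Real.sqrt (1 + f' t ^ 2) ≤ t := by
    have key := aux_le_zero b (fun t => f' t / Real.sqrt (1 + f' t ^ 2) - t)
      (fun t => f'' t / Real.sqrt (1 + f' t ^ 2) ^ 3 - 1) ?_ ?_
    · intro t ht
      have := key t ht
      simp only [hf'0] at this
      norm_num at this
      exact this
    · intro t ht
      have hpos : 0 < 1 + f' t ^ 2 := by positivity
      have hs : 0 < Real.sqrt (1 + f' t ^ 2) := Real.sqrt_pos.2 hpos
      have hsq := Real.sq_sqrt hpos.le
      have h1 := (((hf'' t ht).pow 2).const_add 1).sqrt hpos.ne'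
      have h2 := ((hf'' t ht).div h1 hs.ne').sub (hasDerivAt_id t)
      refine h2.congr_deriv ?_
      simp only [Pi.pow_apply]
      generalize Real.sqrt (1 + f' t ^ 2) = s at *
      field_simp
      have : s ^ 2 - f' t ^ 2 = 1 := by linarith
      norm_num
      linear_combination 2 * (f'' t) * this
    · intro t ht
      have hpos : 0 < 1 + f' t ^ 2 := by positivity
      have hs : 0 < Real.sqrt (1 + f' t ^ 2) := Real.sqrt_pos.2 hpos
      have h := hcurv t ht
      have e : (1 + (f' t) ^ 2) ^ ((3 : ℝ) / 2) = Real.sqrt (1 + f' t ^ 2) ^ 3 := by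
        rw [Real.sqrt_eq_rpow, ← Real.rpow_natCast (_ ^ ((1 : ℝ) / 2)) 3, ← Real.rpow_mul hpos.le]
        norm_num
      rw [e] at h
      have := (div_le_one (pow_pos hs 3)).2 h
      simpa using this
  have key := aux_le_zero b (fun t => f t + Real.sqrt (1 - t ^ 2))
      (fun t => f' t - t / Real.sqrt (1 - t ^ 2)) ?_ ?_
  · intro t ht
    have := key t ht
    simp only [hf0] at this
    norm_num at this
    linarith
  · intro t ht
    have hpos : 0 < 1 - t ^ 2 := by nlinarith [ht.1, ht.2]
    have hs : 0 < Real.sqrt (1 - t ^ 2) := Real.sqrt_pos.2 hpos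
    have h1 := (((hasDerivAt_id t).pow 2).const_sub 1).sqrt hpos.ne'
    refine ((hf' t ht).add h1).congr_deriv ?_
    simp only [Pi.pow_apply, id]
    field_simp
    norm_num
    try ring
  · intro t ht
    have hpos : 0 < 1 - t ^ 2 := by nlinarith [ht.1, ht.2]
    have hs : 0 < Real.sqrt (1 - t ^ 2) := Real.sqrt_pos.2 hpos
    have hsq := Real.sq_sqrt hpos.le
    have hpos' : 0 < 1 + f' t ^ 2 := by positivity
    have hs' : 0 < Real.sqrt (1 + f' t ^ 2) := Real.sqrt_pos.2 hpos'
    have hsq' := Real.sq_sqrt hpos'.le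
    have h := (div_le_iff₀ hs').1 (hg t ht)
    rw [sub_nonpos, le_div_iff₀ hs]
    rcases le_total (f' t) 0 with hp | hp
    · nlinarith [ht.1]
    · refine (sq_le_sq₀ (mul_nonneg hp hs.le) ht.1).1 ?_
      have h2 := pow_le_pow_left₀ hp h 2
      rw [mul_pow, hsq'] at h2
      rw [mul_pow, hsq]
      linarith
end
end
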